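/- arXiv:1606.01446 — 5 statements merged into one kernel-verified Lean document; each statement's English description precedes it below -/
import Mathlib

section
/- Let (B, ∗, ∘) be a biquandle and let x, y be two elements of B. If x ∗ y = y ∘ x, then x = y. -/
/-- A biquandle structure on a type `B`: two binary operations `star` and `circ`
satisfying the biquandle axioms. -/
structure IsBiquandle {B : Type*} (star circ : B → B → B) : Prop where
  idem : ∀ x, star x x = circ x x
  bij_star : ∀ x, Function.Bijective fun y => star y x
  bij_circ : ∀ x, Function.Bijective fun y => circ y x
  bij_S : Function.Bijective fun p : B × B => (circ p.2 p.1, star p.1 p.2)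
  ax3a : ∀ x y z, circ (circ z y) (star x y) = circ (circ z x) (circ y x)
  ax3b : ∀ x y z, star (circ y x) (circ z x) = circ (star y z) (star x z)
  ax3c : ∀ x y z, star (star x y) (circ z y) = star (star x z) (star y z)

/-- Lemma 5.3: in a biquandle, if `x ∗ y = y ∘ x` then `x = y`. -/
theorem stmt_0 {B : Type*} (star circ : B → B → B)
    (hB : IsBiquandle star circ) (x y : B) (h : star x y = circ y x) : x = y := by
  have h1 := hB.ax3a x y y
  rw [h] at h1
  have h2 : circ y y = circ y x := (hB.bij_circ (circ y x)).1 h1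
  apply (hB.bij_star y).1
  show star x y = star y y
  rw [h, hB.idem, h2]
end

section
/- Let (Q, {∗_i}_{i∈ℤ}) be an indexed quandle, A an abelian group (written multiplicatively), and ψ = {φ_i : Q×Q → A}_{i∈ℤ} a family of maps. Define on the set E(Q,A,ψ) = A × Q the operations (a₁, x₁) ∗_i (a₂, x₂) = (a₁ · φ_i(x₁, x₂), x₁ ∗_i x₂) for each i ∈ ℤ. Then (E(Q,A,ψ), {∗_i}_{i∈ℤ}) is an indexed quandle if and only if ψ is a generalized indexed quandle 2-cocycle, i.e., φ_i(a,c)⁻¹ · φ_i(a ∗_{i−j} b, c) · φ_{i−j}(a,b) · φ_{i−j}(a ∗_i c, b ∗_j c)⁻¹ = 1 for all a,b,c ∈ Q and i,j ∈ ℤ, and φ_0(a,a) = 1 for all a ∈ Q. -/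
/-- An indexed quandle structure on a type `Q`: a binary operation `op i` for each
`i : ℤ`, satisfying the indexed quandle axioms. -/
structure IsIndexedQuandle {Q : Type*} (op : ℤ → Q → Q → Q) : Prop where
  idem : ∀ a, op 0 a a = a
  bij : ∀ (i : ℤ) (b : Q), Function.Bijective fun a => op i a b
  distrib : ∀ (i j : ℤ) (a b c : Q),
    op j (op i a b) c = op i (op j a c) (op (j - i) b c)

/-- Proposition 5.10: `E(Q, A, ψ) = A × Q` with operations
`(a₁, x₁) ∗_i (a₂, x₂) = (a₁ · φ_i(x₁, x₂), x₁ ∗_i x₂)` is an indexed quandle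
if and only if `ψ = {φ_i}` is a generalized indexed quandle 2-cocycle. -/
theorem stmt_1 {Q : Type*} {A : Type*} [CommGroup A]
    (op : ℤ → Q → Q → Q) (φ : ℤ → Q → Q → A)
    (hQ : IsIndexedQuandle op) :
    IsIndexedQuandle (fun (i : ℤ) (p q : A × Q) =>
        (p.1 * φ i p.2 q.2, op i p.2 q.2)) ↔
      ((∀ (i j : ℤ) (a b c : Q),
          (φ i a c)⁻¹ * φ i (op (i - j) a b) c * φ (i - j) a b *
            (φ (i - j) (op i a c) (op j b c))⁻¹ = 1) ∧
        ∀ a : Q, φ 0 a a = 1) := by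
  have key : ∀ x y z w : A, x⁻¹ * y * z * w⁻¹ = 1 ↔ z * y = x * w := by
    intro x y z w
    rw [mul_inv_eq_one, mul_assoc, inv_mul_eq_iff_eq_mul, mul_comm y z]
  constructor
  · intro h
    refine ⟨fun i j a b c => ?_, fun a => ?_⟩
    · rw [key]
      have h1 := congrArg Prod.fst (h.distrib (i - j) i (1, a) (1, b) (1, c))
      simpa using h1
    · have h1 := congrArg Prod.fst (h.idem (1, a))
      simpa using h1
  · rintro ⟨h, h0⟩
    refine ⟨?_, ?_, ?_⟩
    · rintro ⟨a, x⟩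
      simp [h0, hQ.idem]
    · rintro i ⟨b, y⟩
      constructor
      · rintro ⟨a, x⟩ ⟨a', x'⟩ e
        have e1 := congrArg Prod.fst e
        have e2 := congrArg Prod.snd e
        have e3 : x = x' := (hQ.bij i y).1 e2
        subst e3
        have e4 : a = a' := mul_right_cancel e1
        rw [e4]
      · rintro ⟨c, z⟩
        obtain ⟨x, hx⟩ := (hQ.bij i y).2 z
        refine ⟨(c * (φ i x y)⁻¹, x), ?_⟩
        have hx' : op i x y = z := hx
        simp [hx']
    · rintro i j ⟨a, x⟩ ⟨b, y⟩ ⟨c, z⟩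
      have h1 := (key _ _ _ _).1 (h j (j - i) x y z)
      rw [sub_sub_cancel] at h1
      refine Prod.ext ?_ (hQ.distrib i j x y z)
      change a * φ i x y * φ j (op i x y) z
        = a * φ j x z * φ i (op j x z) (op (j - i) y z)
      rw [mul_assoc, h1, mul_assoc]
end

section
/- On the ring of Laurent polynomials ℤ[t, t⁻¹], the operations a ∗_i b = t·a + (1 − t)·b + i (for i ∈ ℤ, where i denotes the constant Laurent polynomial i) make ℤ[t, t⁻¹] an indexed quandle. -/
open LaurentPolynomial

/-- The Laurent polynomial ring `ℤ[t, t⁻¹]` with operations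
`a ∗_i b = t·a + (1 − t)·b + i` is an indexed quandle. -/
theorem stmt_3 :
    IsIndexedQuandle (fun (i : ℤ) (a b : LaurentPolynomial ℤ) =>
      T 1 * a + (1 - T 1) * b + (i : LaurentPolynomial ℤ)) := by
  have h : (T (-1) : LaurentPolynomial ℤ) * T 1 = 1 := by
    rw [← T_add]; simp
  generalize (T 1 : LaurentPolynomial ℤ) = t at *
  generalize (T (-1) : LaurentPolynomial ℤ) = s at *
  refine ⟨fun a => ?_, fun i b => ⟨fun x y hxy => ?_, fun y => ⟨s * (y - (1 - t) * b - i), ?_⟩⟩,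
    fun i j a b c => ?_⟩
  · push_cast; ring
  · simp only at hxy
    linear_combination s * hxy + (y - x) * h
  · simp only
    linear_combination (y - (1 - t) * b - i) * h
  · push_cast; ring
end

section
/- Let G be a group, φ an automorphism of G, and z an element of the center of G. Then the operations a ∗_i b = φ(a·b⁻¹)·b·z^i (for i ∈ ℤ) make G an indexed quandle. -/
/-- A group `G` with an automorphism `φ` and a central element `z` is an indexed
quandle under the operations `a ∗_i b = φ(a·b⁻¹)·b·z^i`. -/
theorem stmt_4 {G : Type*} [Group G] (φ : G ≃* G) (z : G)
    (hz : z ∈ Subgroup.center G) :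
    IsIndexedQuandle (fun (i : ℤ) (a b : G) => φ (a * b⁻¹) * b * z ^ i) := by
  have hc : ∀ (n : ℤ) (g : G), z ^ n * g = g * z ^ n := fun n g =>
    ((Subgroup.mem_center_iff.mp (Subgroup.zpow_mem _ hz n)) g).symm
  refine ⟨fun a => by simp, fun i b => ⟨fun a a' h => ?_, fun y => ?_⟩, fun i j a b c => ?_⟩
  · simpa using h
  · exact ⟨φ.symm (y * (z ^ i)⁻¹ * b⁻¹) * b, by simp⟩
  · have hw : ∀ g : G, φ (z ^ i) * g = g * φ (z ^ i) := fun g => by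
      have := congrArg φ (hc i (φ.symm g))
      simpa only [map_mul, MulEquiv.apply_symm_apply] using this
    have h1 : φ (a * c⁻¹) * c * z ^ j * (φ (b * c⁻¹) * c * z ^ (j - i))⁻¹
        = φ (a * b⁻¹) * z ^ i := by
      rw [mul_inv_eq_iff_eq_mul, mul_assoc (φ (a * b⁻¹)), hc i, mul_assoc _ (z ^ (j - i)),
        ← zpow_add, sub_add_cancel]
      simp [mul_assoc]
    have h2 : z ^ (j - i) * z ^ i = z ^ j := by rw [← zpow_add, sub_add_cancel]
    show φ (φ (a * b⁻¹) * b * z ^ i * c⁻¹) * c * z ^ j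
      = φ (φ (a * c⁻¹) * c * z ^ j * (φ (b * c⁻¹) * c * z ^ (j - i))⁻¹)
        * (φ (b * c⁻¹) * c * z ^ (j - i)) * z ^ i
    rw [h1, mul_assoc (φ (a * b⁻¹)) b, ← hc i b, ← h2]
    simp only [map_mul, mul_assoc]
end

section
/- Let (Q, ∗) be a connected quandle, i.e., for all x, z ∈ Q, z can be obtained from x by finitely many applications of the maps a ↦ a ∗ y (for various y ∈ Q) and their inverses (equivalently, x and z are related by the equivalence relation generated by the relation { (a, a ∗ y) : a, y ∈ Q }). Let 𝔊_Q be the group with one generator g(x,y) for each pair (x, y) ∈ Q × Q, and relations g(x,x) = 1, g(x,y) = g(x∗z, y∗z), and g(x,z) = g(x∗y, z) for all x, y, z ∈ Q. Then 𝔊_Q is the trivial group, i.e., every element of 𝔊_Q equals the identity. -/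
/-- A quandle structure on a type `Q` given by a binary operation `star`. -/
structure IsQuandle {Q : Type*} (star : Q → Q → Q) : Prop where
  idem : ∀ a, star a a = a
  bij : ∀ b : Q, Function.Bijective fun a => star a b
  distrib : ∀ a b c, star (star a b) c = star (star a c) (star b c)

/-- The relator set of the group `𝔊_Q` associated to a quandle `(Q, ∗)`:
generators `g(x,y)` for `(x,y) ∈ Q × Q`, relations `g(x,x) = 1`,
`g(x,y) = g(x∗z, y∗z)` and `g(x,z) = g(x∗y, z)`. -/
def quandleRels {Q : Type*} (star : Q → Q → Q) : Set (FreeGroup (Q × Q)) :=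
  {w | (∃ x : Q, w = FreeGroup.of (x, x)) ∨
    (∃ x y z : Q, w = FreeGroup.of (x, y) * (FreeGroup.of (star x z, star y z))⁻¹) ∨
    (∃ x y z : Q, w = FreeGroup.of (x, z) * (FreeGroup.of (star x y, z))⁻¹)}

/-- If `(Q, ∗)` is a connected quandle (any two elements are related by the
equivalence relation generated by `a ↦ a ∗ y`), then the group `𝔊_Q` is trivial. -/
theorem stmt_9 {Q : Type*} (star : Q → Q → Q) (hQ : IsQuandle star)
    (hconn : ∀ x z : Q,
      Relation.EqvGen (fun a b : Q => ∃ y : Q, b = star a y) x z) :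
    ∀ g : PresentedGroup (quandleRels star), g = 1 := by
  have key : ∀ x z : Q, ∀ t : Q,
      (PresentedGroup.of (x, t) : PresentedGroup (quandleRels star)) =
        PresentedGroup.of (z, t) := by
    intro x z t
    induction hconn x z with
    | rel a b h =>
      obtain ⟨y, rfl⟩ := h
      have h1 : PresentedGroup.mk (quandleRels star)
          (FreeGroup.of (a, t) * (FreeGroup.of (star a y, t))⁻¹) = 1 :=
        PresentedGroup.one_of_mem (Or.inr (Or.inr ⟨a, y, t, rfl⟩))
      rw [map_mul, map_inv] at h1
      exact mul_inv_eq_one.mp h1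
    | refl a => rfl
    | symm a b _ ih => exact ih.symm
    | trans a b c _ _ ih1 ih2 => exact ih1.trans ih2
  have gen : ∀ p : Q × Q,
      (PresentedGroup.of p : PresentedGroup (quandleRels star)) = 1 := by
    rintro ⟨x, t⟩
    rw [key x t t]
    exact PresentedGroup.one_of_mem (Or.inl ⟨t, rfl⟩)
  have hh : MonoidHom.id (PresentedGroup (quandleRels star)) = 1 :=
    PresentedGroup.ext (fun p => gen p)
  intro g
  exact DFunLike.congr_fun hh g
end
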